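/- Let S ∈ ℝ^{n×n} with S ≻ 0, Ω ∈ ℝ^{n×n} with Ω ≻ 0, F, H ∈ ℝ^{n×n}, and μ, σ > 0 such that S·F + Fᵀ·S ⪯ −S·Ω·S and μ·[[−S·Ω·S/2, S·H],[(S·H)ᵀ, 0]] ⪯ [[−2σ²·I, 0],[0, I]]. Then for every ν > 0 there exist c₁ ≥ 1 and c₂, c₃, c₄ > 0 such that for every bounded continuous d : [0,∞) → ℝⁿ, every continuous e : [0,∞) → ℝⁿ, and every differentiable x : [0,∞) → ℝⁿ satisfying x′(t) = F·x(t) + H·e(t) + d(t) and ‖e(t)‖ ≤ σ·‖x(t)‖ + ν for all t ≥ 0, one has ‖x(t)‖ ≤ c₁·e^{−c₂·t}·‖x(0)‖ + c₃·sup_{s∈[0,t]}‖d(s)‖ + c₄·ν for all t ≥ 0. -/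

import Mathlib

open Matrix

lemma aux_form {n : ℕ} (M : Matrix (Fin n) (Fin n) ℝ) (x y : EuclideanSpace ℝ (Fin n)) :
    inner ℝ x (Matrix.toEuclideanCLM (𝕜 := ℝ) M y) = x.ofLp ⬝ᵥ M *ᵥ y.ofLp := by
  rw [EuclideanSpace.inner_eq_star_dotProduct, Matrix.ofLp_toEuclideanCLM, dotProduct_comm]
  simp

lemma aux_upper {n : ℕ} (M : Matrix (Fin n) (Fin n) ℝ) :
    ∃ s : ℝ, 1 ≤ s ∧ ∀ x y : EuclideanSpace ℝ (Fin n),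
      x.ofLp ⬝ᵥ M *ᵥ y.ofLp ≤ s * ‖x‖ * ‖y‖ := by
  refine ⟨‖Matrix.toEuclideanCLM (𝕜 := ℝ) M‖ + 1, by linarith [norm_nonneg (Matrix.toEuclideanCLM (𝕜 := ℝ) M)], fun x y => ?_⟩
  rw [← aux_form]
  have h1 := real_inner_le_norm x (Matrix.toEuclideanCLM (𝕜 := ℝ) M y)
  have h2 := (Matrix.toEuclideanCLM (𝕜 := ℝ) M).le_opNorm y
  have h3 := mul_le_mul_of_nonneg_left h2 (norm_nonneg x)
  nlinarith [mul_nonneg (norm_nonneg x) (norm_nonneg y)]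

lemma aux_lower {n : ℕ} (M : Matrix (Fin n) (Fin n) ℝ) (hM : M.PosDef) :
    ∃ p : ℝ, 0 < p ∧ p ≤ 1 ∧ ∀ x : EuclideanSpace ℝ (Fin n),
      p * ‖x‖ ^ 2 ≤ x.ofLp ⬝ᵥ M *ᵥ x.ofLp := by
  have hpos : ∀ x : EuclideanSpace ℝ (Fin n), x ≠ 0 → 0 < x.ofLp ⬝ᵥ M *ᵥ x.ofLp := by
    intro x hx
    have := hM.dotProduct_mulVec_pos (x := x.ofLp) (by simpa using hx)
    simpa using this
  have hc : Continuous fun x : EuclideanSpace ℝ (Fin n) => x.ofLp ⬝ᵥ M *ᵥ x.ofLp := by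
    simp_rw [← aux_form]
    fun_prop
  have key : ∃ p : ℝ, 0 < p ∧ ∀ x ∈ Metric.sphere (0 : EuclideanSpace ℝ (Fin n)) 1,
      p ≤ x.ofLp ⬝ᵥ M *ᵥ x.ofLp := by
    rcases (Metric.sphere (0 : EuclideanSpace ℝ (Fin n)) 1).eq_empty_or_nonempty with h | h
    · exact ⟨1, one_pos, by simp [h]⟩
    · obtain ⟨z, hz, hmin⟩ := (isCompact_sphere _ _).exists_isMinOn h hc.continuousOn
      refine ⟨_, hpos z ?_, fun x hx => hmin hx⟩
      rintro rfl
      simp at hz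
  obtain ⟨p, hp, h⟩ := key
  refine ⟨min p 1, by positivity, min_le_right _ _, fun x => ?_⟩
  by_cases hx : x = 0
  · simp [hx]
  have hn : 0 < ‖x‖ := norm_pos_iff.mpr hx
  have := h (‖x‖⁻¹ • x) (by simp [norm_smul, hn.ne'])
  simp only [WithLp.ofLp_smul, mulVec_smul, smul_dotProduct, dotProduct_smul, smul_eq_mul] at this
  have h2 : min p 1 ≤ ‖x‖⁻¹ * (‖x‖⁻¹ * (x.ofLp ⬝ᵥ M *ᵥ x.ofLp)) := (min_le_left _ _).trans this
  calc min p 1 * ‖x‖ ^ 2 ≤ (‖x‖⁻¹ * (‖x‖⁻¹ * (x.ofLp ⬝ᵥ M *ᵥ x.ofLp))) * ‖x‖ ^ 2 := by gcongr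
    _ = _ := by field_simp

lemma aux_gronwall (V V' : ℝ → ℝ) (a K t : ℝ) (ha : 0 < a) (ht : 0 ≤ t)
    (hV : ∀ u ∈ Set.Icc 0 t, HasDerivWithinAt V (V' u) (Set.Ici 0) u)
    (hV' : ∀ u ∈ Set.Icc 0 t, V' u ≤ -a * V u + K) (hK : 0 ≤ K) :
    V t ≤ Real.exp (-a * t) * V 0 + K / a := by
  have hE : ∀ u, HasDerivAt (fun u => Real.exp (a * u)) (Real.exp (a * u) * a) u := fun u => by
    simpa using ((hasDerivAt_id u).const_mul a).exp
  have hanti : AntitoneOn (fun u => Real.exp (a * u) * (V u - K / a)) (Set.Icc 0 t) := by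
    have hd : ∀ u ∈ interior (Set.Icc 0 t), HasDerivAt (fun u => Real.exp (a * u) * (V u - K / a))
        (Real.exp (a * u) * a * (V u - K / a) + Real.exp (a * u) * V' u) u := by
      intro u hu
      rw [interior_Icc] at hu
      have h1 := (hV u ⟨hu.1.le, hu.2.le⟩).hasDerivAt (Ici_mem_nhds hu.1)
      exact (hE u).mul (h1.sub_const _)
    apply antitoneOn_of_deriv_nonpos (convex_Icc _ _)
    · intro u hu
      have h1 := ((hV u hu).mono (s := Set.Icc 0 t) fun y hy => hy.1).continuousWithinAt
      exact ((hE u).continuousAt.continuousWithinAt).mul (h1.sub continuousWithinAt_const)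
    · exact fun u hu => (hd u hu).differentiableAt.differentiableWithinAt
    · intro u hu
      rw [(hd u hu).deriv]
      have := hV' u (interior_subset hu)
      have e : Real.exp (a * u) * a * (V u - K / a) + Real.exp (a * u) * V' u
        = Real.exp (a * u) * (V' u - (-a * V u + K)) := by field_simp; ring
      rw [e]
      exact mul_nonpos_of_nonneg_of_nonpos (Real.exp_pos _).le (by linarith)
  have h := hanti ⟨le_rfl, ht⟩ ⟨ht, le_rfl⟩ ht
  simp only [mul_zero, Real.exp_zero, one_mul] at h
  have h2 := mul_le_mul_of_nonneg_left h (Real.exp_pos (-a * t)).le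
  rw [← mul_assoc, ← Real.exp_add] at h2
  have : -a * t + a * t = 0 := by ring
  rw [this, Real.exp_zero] at h2
  have : 0 ≤ Real.exp (-a * t) * (K / a) := by positivity
  linarith

lemma aux_final (p s a q μ X X0 D ν E V V0 : ℝ) (hp : 0 < p) (hs : 0 < s) (ha : 0 < a)
    (hq : 0 < q) (hμ : 0 < μ) (hX0 : 0 ≤ X0) (hD : 0 ≤ D) (hν : 0 ≤ ν)
    (hE : 0 ≤ E) (h1 : p * X ^ 2 ≤ V) (h0 : V0 ≤ s * X0 ^ 2)
    (h : V ≤ E ^ 2 * V0 + (4 * s ^ 2 / q * D ^ 2 + 2 * ν ^ 2 / μ) / a) :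
    X ≤ √(s / p) * E * X0 + √(4 * s ^ 2 / (q * a * p)) * D + √(2 / (μ * a * p)) * ν := by
  apply le_of_sq_le_sq _ (by positivity)
  have e1 := Real.sq_sqrt (show 0 ≤ s / p by positivity)
  have e2 := Real.sq_sqrt (show 0 ≤ 4 * s ^ 2 / (q * a * p) by positivity)
  have e3 := Real.sq_sqrt (show 0 ≤ 2 / (μ * a * p) by positivity)
  have hA : 0 ≤ √(s / p) * E * X0 := by positivity
  have hB : 0 ≤ √(4 * s ^ 2 / (q * a * p)) * D := by positivity
  have hC : 0 ≤ √(2 / (μ * a * p)) * ν := by positivity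
  have hX : X ^ 2 ≤ (√(s / p) * E * X0) ^ 2 + (√(4 * s ^ 2 / (q * a * p)) * D) ^ 2
      + (√(2 / (μ * a * p)) * ν) ^ 2 := by
    simp only [mul_pow, e1, e2, e3]
    have : p * X ^ 2 ≤ E ^ 2 * (s * X0 ^ 2) + (4 * s ^ 2 / q * D ^ 2 + 2 * ν ^ 2 / μ) / a := by
      have := mul_le_mul_of_nonneg_left h0 (sq_nonneg E)
      linarith
    rw [← le_div_iff₀' hp] at this
    refine this.trans (le_of_eq ?_)
    field_simp
    ring
  nlinarith [mul_nonneg hA hB, mul_nonneg hB hC, mul_nonneg hA hC]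

lemma aux_lyap {n : ℕ}
    (S Ω F H : Matrix (Fin n) (Fin n) ℝ) (hS : S.PosDef)
    (μ σ : ℝ) (hμ : 0 < μ) (hσ : 0 < σ)
    (hLyap : (-(S * Ω * S) - (S * F + Fᵀ * S)).PosSemidef)
    (hLMI : (Matrix.fromBlocks ((-(2 * σ ^ 2)) • (1 : Matrix (Fin n) (Fin n) ℝ)) 0 0
          (1 : Matrix (Fin n) (Fin n) ℝ) -
        μ • Matrix.fromBlocks (-((1 / 2 : ℝ) • (S * Ω * S))) (S * H) (S * H)ᵀ
          (0 : Matrix (Fin n) (Fin n) ℝ)).PosSemidef) (ν : ℝ) 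
    (x e d : EuclideanSpace ℝ (Fin n)) (he : ‖e‖ ≤ σ * ‖x‖ + ν) :
    x.ofLp ⬝ᵥ S *ᵥ (F *ᵥ x.ofLp + H *ᵥ e.ofLp + d.ofLp) +
      (F *ᵥ x.ofLp + H *ᵥ e.ofLp + d.ofLp) ⬝ᵥ S *ᵥ x.ofLp ≤
      -(1 / 2) * (x.ofLp ⬝ᵥ (S * Ω * S) *ᵥ x.ofLp) + 2 * ν ^ 2 / μ
        + 2 * (x.ofLp ⬝ᵥ S *ᵥ d.ofLp) := by
  have hsym : ∀ v w : Fin n → ℝ, v ⬝ᵥ S *ᵥ w = w ⬝ᵥ S *ᵥ v := by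
    intro v w
    have hT : Sᵀ = S := by simpa using hS.isHermitian.eq
    rw [dotProduct_mulVec, ← mulVec_transpose, hT, dotProduct_comm]
  have hn : ∀ v : EuclideanSpace ℝ (Fin n), v.ofLp ⬝ᵥ v.ofLp = ‖v‖ ^ 2 := by
    intro v
    rw [EuclideanSpace.real_norm_sq_eq]
    simp [dotProduct, sq]
  rw [hsym (F *ᵥ x.ofLp + H *ᵥ e.ofLp + d.ofLp)]
  have h1 := hLyap.dotProduct_mulVec_nonneg x.ofLp
  have h2 := hLMI.dotProduct_mulVec_nonneg (Sum.elim x.ofLp e.ofLp)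
  have t1 : x.ofLp ⬝ᵥ (Fᵀ * S) *ᵥ x.ofLp = x.ofLp ⬝ᵥ S *ᵥ (F *ᵥ x.ofLp) := by
    rw [← mulVec_mulVec, dotProduct_mulVec, vecMul_transpose, hsym]
  have t2 : e.ofLp ⬝ᵥ (S * H)ᵀ *ᵥ x.ofLp = x.ofLp ⬝ᵥ S *ᵥ (H *ᵥ e.ofLp) := by
    rw [dotProduct_mulVec, vecMul_transpose, dotProduct_comm, ← mulVec_mulVec]
  simp only [star_trivial, sub_mulVec, neg_mulVec, add_mulVec, dotProduct_sub, dotProduct_neg,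
    dotProduct_add, t1] at h1
  rw [← mulVec_mulVec (M := S) (N := F)] at h1
  simp only [star_trivial, sub_mulVec, smul_mulVec, fromBlocks_mulVec, dotProduct_sub,
    dotProduct_smul, sumElim_dotProduct_sumElim, Sum.elim_comp_inl, Sum.elim_comp_inr,
    neg_mulVec, dotProduct_neg, dotProduct_add, one_mulVec, zero_mulVec, add_zero, zero_add,
    dotProduct_zero, t2, hn, smul_eq_mul] at h2
  rw [← mulVec_mulVec (M := S) (N := H)] at h2
  simp only [mulVec_add, dotProduct_add]
  have he2 : ‖e‖ ^ 2 ≤ 2 * σ ^ 2 * ‖x‖ ^ 2 + 2 * ν ^ 2 := by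
    have := pow_le_pow_left₀ (norm_nonneg e) he 2
    nlinarith [sq_nonneg (σ * ‖x‖ - ν)]
  have h3 : 2 * (x.ofLp ⬝ᵥ S *ᵥ (H *ᵥ e.ofLp)) - 1 / 2 * (x.ofLp ⬝ᵥ (S * Ω * S) *ᵥ x.ofLp)
      ≤ 2 * ν ^ 2 / μ := by
    rw [le_div_iff₀ hμ]
    nlinarith
  linarith

theorem stmt_15 (n : ℕ)
    (S Ω F H : Matrix (Fin n) (Fin n) ℝ) (hS : S.PosDef) (hΩ : Ω.PosDef)
    (μ σ : ℝ) (hμ : 0 < μ) (hσ : 0 < σ)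
    (hLyap : (-(S * Ω * S) - (S * F + Fᵀ * S)).PosSemidef)
    (hLMI : (Matrix.fromBlocks ((-(2 * σ ^ 2)) • (1 : Matrix (Fin n) (Fin n) ℝ)) 0 0
          (1 : Matrix (Fin n) (Fin n) ℝ) -
        μ • Matrix.fromBlocks (-((1 / 2 : ℝ) • (S * Ω * S))) (S * H) (S * H)ᵀ
          (0 : Matrix (Fin n) (Fin n) ℝ)).PosSemidef) :
    ∀ ν : ℝ, 0 < ν →
      ∃ c₁ c₂ c₃ c₄ : ℝ, 1 ≤ c₁ ∧ 0 < c₂ ∧ 0 < c₃ ∧ 0 < c₄ ∧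
        ∀ d e x : ℝ → EuclideanSpace ℝ (Fin n),
          ContinuousOn d (Set.Ici 0) →
          (∃ Cd : ℝ, ∀ t ∈ Set.Ici (0 : ℝ), ‖d t‖ ≤ Cd) →
          ContinuousOn e (Set.Ici 0) →
          (∀ t ∈ Set.Ici (0 : ℝ),
            HasDerivWithinAt x
              ((EuclideanSpace.equiv (Fin n) ℝ).symm
                  (F.mulVec (x t) + H.mulVec (e t)) + d t)
              (Set.Ici 0) t) →
          (∀ t ∈ Set.Ici (0 : ℝ), ‖e t‖ ≤ σ * ‖x t‖ + ν) →
          ∀ t ∈ Set.Ici (0 : ℝ),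
            ‖x t‖ ≤ c₁ * Real.exp (-c₂ * t) * ‖x 0‖ +
              c₃ * sSup ((fun u => ‖d u‖) '' Set.Icc 0 t) + c₄ * ν := by
  intro ν hν
  have hQ : (S * Ω * S).PosDef := by
    have h := hΩ.conjTranspose_mul_mul_same (B := S) (Matrix.mulVec_injective_of_isUnit hS.isUnit)
    rwa [hS.isHermitian.eq] at h
  obtain ⟨p, hp, hp1, hpl⟩ := aux_lower S hS
  obtain ⟨q, hq, -, hql⟩ := aux_lower _ hQ
  obtain ⟨s, hs1, hsu⟩ := aux_upper S
  have hs : 0 < s := by linarith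
  obtain ⟨a, ha, haq⟩ : ∃ a : ℝ, 0 < a ∧ a * s = q / 4 := ⟨q / (4 * s), by positivity, by field_simp⟩
  refine ⟨√(s / p), a / 2, √(4 * s ^ 2 / (q * a * p)), √(2 / (μ * a * p)), ?_, by positivity,
    by positivity, by positivity, ?_⟩
  · rw [Real.one_le_sqrt, one_le_div hp]; linarith
  rintro d e x - ⟨Cd, hCd⟩ - hx he t ht
  have ht : 0 ≤ t := ht
  have hbdd : BddAbove ((fun u => ‖d u‖) '' Set.Icc 0 t) := by
    refine ⟨Cd, ?_⟩
    rintro _ ⟨u, hu, rfl⟩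
    exact hCd u hu.1
  have hDu : ∀ u ∈ Set.Icc 0 t, ‖d u‖ ≤ sSup ((fun u => ‖d u‖) '' Set.Icc 0 t) :=
    fun u hu => le_csSup hbdd ⟨u, hu, rfl⟩
  have hD0 := (norm_nonneg _).trans (hDu 0 ⟨le_rfl, ht⟩)
  generalize sSup ((fun u => ‖d u‖) '' Set.Icc 0 t) = D at *
  have hV := aux_gronwall (fun u => inner ℝ (x u) (Matrix.toEuclideanCLM (𝕜 := ℝ) S (x u))) _ a
    (4 * s ^ 2 / q * D ^ 2 + 2 * ν ^ 2 / μ) t ha ht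
    (fun u hu => (hx u hu.1).inner ℝ
      ((Matrix.toEuclideanCLM (𝕜 := ℝ) S).hasFDerivAt.comp_hasDerivWithinAt u (hx u hu.1)))
    (fun u hu => by
      rw [aux_form, aux_form, aux_form]
      refine (aux_lyap S Ω F H hS μ σ hμ hσ hLyap hLMI ν (x u) (e u) (d u) (he u hu.1)).trans ?_
      have h1 := hql (x u)
      have h2 := hsu (x u) (d u)
      have h3 := hsu (x u) (x u)
      have h4 : s * ‖x u‖ * ‖d u‖ ≤ s * ‖x u‖ * D := by gcongr; exact hDu u hu
      have h5 : 2 * (s * ‖x u‖ * D) ≤ q / 4 * ‖x u‖ ^ 2 + 4 * s ^ 2 / q * D ^ 2 := by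
        have : q / 4 * ‖x u‖ ^ 2 + 4 * s ^ 2 / q * D ^ 2 - 2 * (s * ‖x u‖ * D)
          = (q * ‖x u‖ - 4 * s * D) ^ 2 / (4 * q) := by field_simp; ring
        have : 0 ≤ (q * ‖x u‖ - 4 * s * D) ^ 2 / (4 * q) := by positivity
        linarith
      have h6 := mul_le_mul_of_nonneg_left h3 ha.le
      have h7 : a * (s * ‖x u‖ * ‖x u‖) = q / 4 * ‖x u‖ ^ 2 := by rw [← haq]; ring
      linarith) (by positivity)
  simp only [aux_form] at hV
  refine aux_final p s a q μ _ _ D ν _ _ _ hp hs ha hq hμ (norm_nonneg _) hD0 hν.le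
    (Real.exp_pos _).le (hpl (x t)) ((hsu (x 0) (x 0)).trans (le_of_eq (by ring))) ?_
  rw [← Real.exp_nat_mul]
  convert hV using 4
  push_cast; ring
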